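/- Let R be a commutative ring and F a matrix in R[t]^{l×m}. If for every maximal ideal m of R the matrix F(t) is equivalent to F(0) over the localized polynomial ring R_m[t], then F(t) is equivalent to F(0) over R[t]. -/

import Mathlib

/-- Two `l × m` matrices over a commutative ring are equivalent if they differ by
left/right multiplication by square matrices with unit determinant. -/
def MatrixEquiv {B : Type*} [CommRing B] {l m : ℕ}
    (F G : Matrix (Fin l) (Fin m) B) : Prop :=
  ∃ (U : Matrix (Fin l) (Fin l) B) (V : Matrix (Fin m) (Fin m) B),
    IsUnit U.det ∧ IsUnit V.det ∧ F = U * G * V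

/-!
This is Quillen patching. For a multiplicative set `M`, an equivalence `F(X) ~ F(0)` over the
polynomials in `X` over a localization at `M` can be normalized so that the two transition matrices
are the identity at `X = 0`. The substitution `X ↦ s X` then clears their denominators for suitable
`s ∈ M`, and a further one makes the resulting identities true before localizing.
Applied to `F(X + Y)` as a polynomial in `Y`, this gives `F(X + s Y) ~ F(X)` over `R[X, Y]`, with
`s` outside a prescribed maximal ideal. The `a` such that `F(X + a Y) ~ F(X)` form an ideal;
it lies in no maximal ideal, so it contains `1`, and substituting `0` for `X` gives the claim.
-/

open Polynomial
open scoped MatrixGroups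

namespace MatrixEquiv

variable {B B' : Type*} [CommRing B] [CommRing B'] {l m : ℕ} {F G H : Matrix (Fin l) (Fin m) B}

theorem iff_exists_GL :
    MatrixEquiv F G ↔ ∃ (U : GL (Fin l) B) (V : GL (Fin m) B), F = U.val * G * V.val := by
  constructor
  · rintro ⟨U, V, hU, hV, hF⟩
    exact ⟨U.nonsingInvUnit hU, V.nonsingInvUnit hV, hF⟩
  · rintro ⟨U, V, hF⟩
    exact ⟨U, V, Matrix.isUnits_det_units U, Matrix.isUnits_det_units V, hF⟩

theorem refl (F : Matrix (Fin l) (Fin m) B) : MatrixEquiv F F :=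
  iff_exists_GL.2 ⟨1, 1, by simp⟩

theorem symm (h : MatrixEquiv F G) : MatrixEquiv G F := by
  obtain ⟨U, V, rfl⟩ := iff_exists_GL.1 h
  refine iff_exists_GL.2 ⟨U⁻¹, V⁻¹, ?_⟩
  calc G = (U⁻¹.val * U.val) * G * (V.val * V⁻¹.val) := by simp
    _ = U⁻¹.val * (U.val * G * V.val) * V⁻¹.val := by simp only [Matrix.mul_assoc]

theorem trans (h : MatrixEquiv F G) (h' : MatrixEquiv G H) : MatrixEquiv F H := by
  obtain ⟨U, V, rfl⟩ := iff_exists_GL.1 h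
  obtain ⟨U', V', rfl⟩ := iff_exists_GL.1 h'
  exact iff_exists_GL.2 ⟨U * U', V' * V, by simp only [Units.val_mul, Matrix.mul_assoc]⟩

theorem map (h : MatrixEquiv F G) (f : B →+* B') : MatrixEquiv (F.map f) (G.map f) := by
  obtain ⟨U, V, rfl⟩ := iff_exists_GL.1 h
  exact iff_exists_GL.2 ⟨U.map f, V.map f, by simp only [Matrix.map_mul]; rfl⟩

theorem map_aeval {R S T : Type*} [CommRing R] [CommRing S] [CommRing T] [Algebra R S]
    [Algebra R T] {F : Matrix (Fin l) (Fin m) R[X]} {x y : S}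
    (h : MatrixEquiv (F.map (aeval x)) (F.map (aeval y))) (f : S →ₐ[R] T) :
    MatrixEquiv (F.map (aeval (f x))) (F.map (aeval (f y))) := by
  have map_eq (z : S) : F.map (aeval (f z)) = (F.map (aeval z)).map (f : S →+* T) := by
    ext1
    simp [aeval_algHom_apply]
  simpa only [map_eq] using h.map (f : S →+* T)

end MatrixEquiv

section Rescale

variable {A A' ι κ : Type*} [CommRing A] [CommRing A']

/-- The substitution `p(X) ↦ p(s X)`, which clears denominators from the nonconstant coefficients.
In particular `rescale 0` is evaluation at `0`, with values taken in the constant polynomials. -/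
noncomputable def rescale (s : A) : A[X] →+* A[X] :=
  compRingHom (C s * X)

theorem coeff_rescale (s : A) (p : A[X]) (n : ℕ) :
    (rescale s p).coeff n = s ^ n * p.coeff n := by
  rw [rescale, coe_compRingHom_apply, comp_C_mul_X_coeff, mul_comm]

theorem rescale_C_add_X (s x : A) : rescale s (C x + X) = C x + C s * X := by
  simp [rescale]

theorem map_rescale_map_rescale (s t : A) (N : Matrix ι κ A[X]) :
    (N.map (rescale t)).map (rescale s) = N.map (rescale (s * t)) := by
  ext
  simp [coeff_rescale, mul_pow, mul_assoc]

theorem map_rescale_map_mapRingHom (f : A →+* A') (s : A) (N : Matrix ι κ A[X]) :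
    (N.map (rescale s)).map (mapRingHom f) = (N.map (mapRingHom f)).map (rescale (f s)) := by
  ext
  simp [coeff_rescale]

theorem map_aeval_map_rescale {R : Type*} [CommRing R] [Algebra R A] (s : A) (x : A[X])
    (F : Matrix ι κ R[X]) : (F.map (aeval x)).map (rescale s) = F.map (aeval (rescale s x)) := by
  ext1
  exact (aeval_algHom_apply ((aeval (C s * X) : A[X] →ₐ[A] A[X]).restrictScalars R) x _).symm

theorem MatrixEquiv.exists_GL_map_rescale_zero_eq_one {l m : ℕ} {F : Matrix (Fin l) (Fin m) A[X]}
    (h : MatrixEquiv F (F.map (rescale 0))) :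
    ∃ (U : GL (Fin l) A[X]) (V : GL (Fin m) A[X]),
      U.map (rescale 0) = 1 ∧ V.map (rescale 0) = 1 ∧ F = U.val * F.map (rescale 0) * V.val := by
  obtain ⟨U, V, hF⟩ := iff_exists_GL.1 h
  set U₀ := U.map (rescale 0) with hU₀
  set V₀ := V.map (rescale 0) with hV₀
  have hU₀₀ : U₀.map (rescale 0) = U₀ :=
    Units.ext (by simpa using! map_rescale_map_rescale 0 0 U.val)
  have hV₀₀ : V₀.map (rescale 0) = V₀ :=
    Units.ext (by simpa using! map_rescale_map_rescale 0 0 V.val)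
  have hF₀ : F.map (rescale 0) = U₀.val * F.map (rescale 0) * V₀.val := by
    have := congr(Matrix.map $hF (rescale 0))
    rwa [Matrix.map_mul, Matrix.map_mul, map_rescale_map_rescale, zero_mul] at this
  refine ⟨U * U₀⁻¹, V₀⁻¹ * V, ?_, ?_, ?_⟩
  · rw [map_mul, map_inv, hU₀₀, ← hU₀, mul_inv_cancel]
  · rw [map_mul, map_inv, hV₀₀, ← hV₀, inv_mul_cancel]
  · calc F = U.val * ((U₀⁻¹.val * U₀.val) * F.map (rescale 0) * (V₀.val * V₀⁻¹.val)) * V.val := by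
          simpa using hF
      _ = (U * U₀⁻¹).val * (U₀.val * F.map (rescale 0) * V₀.val) * (V₀⁻¹ * V).val := by
          simp only [Units.val_mul, Matrix.mul_assoc]
      _ = (U * U₀⁻¹).val * F.map (rescale 0) * (V₀⁻¹ * V).val := by rw [← hF₀]

end Rescale

section Localization

variable {A A' ι κ : Type*} [CommRing A] [CommRing A'] [Algebra A A'] (M : Submonoid A)
  [IsLocalization M A']

instance isLocalizedModule_mapMatrix [Finite ι] [Finite κ] :
    IsLocalizedModule M ((Algebra.linearMap A A').mapMatrix : Matrix ι κ A →ₗ[A] Matrix ι κ A') :=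
  let f : (κ → A) →ₗ[A] κ → A' := .pi fun j => Algebra.linearMap A A' ∘ₗ .proj j
  inferInstanceAs (IsLocalizedModule M (.pi fun i : ι => f ∘ₗ .proj i))

section

attribute [local instance] Polynomial.algebra Polynomial.isLocalization

theorem exists_map_rescale_eq [Finite ι] [Finite κ] {N N' : Matrix ι κ A[X]}
    (h₀ : N.map (rescale 0) = N'.map (rescale 0))
    (h : N.map (mapRingHom (algebraMap A A')) = N'.map (mapRingHom (algebraMap A A'))) :
    ∃ s ∈ M, N.map (rescale s) = N'.map (rescale s) := by
  obtain ⟨⟨_, s, hs, rfl⟩, hsN⟩ := IsLocalizedModule.exists_of_eq (S := M.map C)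
    (f := (Algebra.linearMap A[X] A'[X]).mapMatrix) h
  refine ⟨s, hs, ?_⟩
  ext i j n
  cases n with
  | zero => simpa [coeff_rescale] using congr(($h₀ i j).coeff 0)
  | succ n =>
    have hcoeff : s * (N i j).coeff (n + 1) = s * (N' i j).coeff (n + 1) := by
      simpa [Submonoid.smul_def] using congr(($hsN i j).coeff (n + 1))
    simp [coeff_rescale, pow_succ, mul_assoc, hcoeff]

theorem exists_map_eq_map_rescale [Finite ι] [Finite κ] {N : Matrix ι κ A'[X]}
    {N₀ : Matrix ι κ A[X]} (h₀ : N₀.map (mapRingHom (algebraMap A A')) = N.map (rescale 0)) :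
    ∃ s ∈ M, ∃ L : Matrix ι κ A[X], L.map (rescale 0) = N₀.map (rescale 0) ∧
      L.map (mapRingHom (algebraMap A A')) = N.map (rescale (algebraMap A A' s)) := by
  obtain ⟨⟨P, _, s, hs, rfl⟩, hP⟩ := IsLocalizedModule.surj (M.map C)
    (Algebra.linearMap A[X] A'[X]).mapMatrix N
  -- The constant terms of `L` are those of `N₀`; after `X ↦ s X`, the coefficient of `X ^ (n + 1)`
  -- in `N` is `s ^ n` times that of `s • N = P`.
  refine ⟨s, hs, .of fun i j => C ((N₀ i j).coeff 0) + X * rescale s (P i j).divX, ?_, ?_⟩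
  · ext i j n
    cases n <;> simp [coeff_rescale, -map_add, -map_mul]
  · ext i j n
    cases n with
    | zero => simpa [coeff_rescale] using congr(($h₀ i j).coeff 0)
    | succ n =>
      have hcoeff : algebraMap A A' s * (N i j).coeff (n + 1) =
          algebraMap A A' ((P i j).coeff (n + 1)) := by
        simpa [Submonoid.smul_def, Algebra.smul_def] using congr(($hP i j).coeff (n + 1))
      simp [coeff_rescale, pow_succ, mul_assoc, hcoeff]

end

theorem exists_GL_map_eq_map_rescale [Fintype ι] [DecidableEq ι] {U : GL ι A'[X]}
    (hU : U.map (rescale 0) = 1) :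
    ∃ s ∈ M, ∃ P : GL ι A[X], P.map (rescale 0) = 1 ∧
      P.map (mapRingHom (algebraMap A A')) = U.map (rescale (algebraMap A A' s)) := by
  have exists_lift {W : GL ι A'[X]} (hW : W.map (rescale 0) = 1) :
      ∃ s ∈ M, ∃ L : Matrix ι ι A[X], L.map (rescale 0) = 1 ∧
        L.map (mapRingHom (algebraMap A A')) = W.val.map (rescale (algebraMap A A' s)) := by
    simpa using exists_map_eq_map_rescale M (N := W.val) (N₀ := 1)
      (by simpa using! congr(($hW).val).symm)
  obtain ⟨a, ha, L, hL₀, hL⟩ := exists_lift hU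
  obtain ⟨b, hb, L', hL'₀, hL'⟩ := exists_lift (W := U⁻¹) (by rw [map_inv, hU, inv_one])
  have hmap : (L.map (rescale b) * L'.map (rescale a)).map (mapRingHom (algebraMap A A')) =
      (1 : Matrix ι ι A[X]).map (mapRingHom (algebraMap A A')) := by
    simp only [Matrix.map_mul, map_rescale_map_mapRingHom, hL, hL', map_rescale_map_rescale]
    rw [mul_comm (algebraMap A A' b), ← Matrix.map_mul, U.mul_inv]
    simp
  have hzero : (L.map (rescale b) * L'.map (rescale a)).map (rescale 0) =
      (1 : Matrix ι ι A[X]).map (rescale 0) := by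
    simp [Matrix.map_mul, map_rescale_map_rescale, hL₀, hL'₀, -Matrix.map_map]
  obtain ⟨c, hc, hinv⟩ := exists_map_rescale_eq M hzero hmap
  simp only [Matrix.map_mul, map_rescale_map_rescale, Matrix.map_one, map_zero, map_one] at hinv
  refine ⟨c * b * a, M.mul_mem (M.mul_mem hc hb) ha,
    Matrix.nonsingInvUnit (L.map (rescale (c * b))) (Matrix.isUnit_det_of_right_inverse hinv),
    Units.ext ?_, Units.ext ?_⟩
  · simpa [hL₀] using! map_rescale_map_rescale 0 (c * b) L
  · calc (L.map (rescale (c * b))).map (mapRingHom (algebraMap A A'))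
        = (L.map (mapRingHom (algebraMap A A'))).map (rescale (algebraMap A A' (c * b))) :=
          map_rescale_map_mapRingHom ..
      _ = U.val.map (rescale (algebraMap A A' (c * b * a))) := by
          rw [hL, map_rescale_map_rescale, ← map_mul]

theorem MatrixEquiv.exists_map_rescale {l m : ℕ} {F : Matrix (Fin l) (Fin m) A[X]}
    (h : MatrixEquiv (F.map (mapRingHom (algebraMap A A')))
      ((F.map (mapRingHom (algebraMap A A'))).map (rescale 0))) :
    ∃ s ∈ M, MatrixEquiv (F.map (rescale s)) (F.map (rescale 0)) := by
  obtain ⟨U, V, hU, hV, hF⟩ := h.exists_GL_map_rescale_zero_eq_one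
  obtain ⟨a, ha, P, hP₀, hP⟩ := exists_GL_map_eq_map_rescale M hU
  obtain ⟨b, hb, Q, hQ₀, hQ⟩ := exists_GL_map_eq_map_rescale M hV
  replace hP₀ : P.val.map (rescale 0) = 1 := congr(($hP₀).val)
  replace hQ₀ : Q.val.map (rescale 0) = 1 := congr(($hQ₀).val)
  replace hP : P.val.map (mapRingHom (algebraMap A A')) =
    U.val.map (rescale (algebraMap A A' a)) := congr(($hP).val)
  replace hQ : Q.val.map (mapRingHom (algebraMap A A')) =
    V.val.map (rescale (algebraMap A A' b)) := congr(($hQ).val)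
  let N := P.val.map (rescale b) * F.map (rescale 0) * Q.val.map (rescale a)
  have hzero : (F.map (rescale (a * b))).map (rescale 0) = N.map (rescale 0) := by
    simp only [N, Matrix.map_mul, map_rescale_map_rescale, zero_mul, hP₀, hQ₀,
      Matrix.one_mul, Matrix.mul_one]
  have hmap : (F.map (rescale (a * b))).map (mapRingHom (algebraMap A A')) =
      N.map (mapRingHom (algebraMap A A')) := by
    rw [map_rescale_map_mapRingHom, hF]
    simp only [N, Matrix.map_mul, map_rescale_map_mapRingHom, hP, hQ, map_rescale_map_rescale,
      map_mul, map_zero, zero_mul, mul_comm]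
  obtain ⟨c, hc, hN⟩ := exists_map_rescale_eq M hzero hmap
  simp only [N, Matrix.map_mul, map_rescale_map_rescale, mul_zero] at hN
  exact ⟨c * (a * b), M.mul_mem hc (M.mul_mem ha hb),
    iff_exists_GL.2 ⟨P.map (rescale (c * b)), Q.map (rescale (c * a)), hN⟩⟩

end Localization

section QuillenIdeal

variable {R : Type*} [CommRing R] {l m : ℕ}

theorem MatrixEquiv.aeval_add_smul {F : Matrix (Fin l) (Fin m) R[X]} {a : R}
    (h : MatrixEquiv (F.map (aeval (C X + a • X : R[X][X]))) (F.map (aeval (C X : R[X][X]))))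
    {S : Type*} [CommRing S] [Algebra R S] (x y : S) :
    MatrixEquiv (F.map (aeval (x + a • y))) (F.map (aeval x)) := by
  simpa only [map_add, map_smul, aevalAeval_X, aevalAeval_Y] using h.map_aeval (aevalAeval x y)

/-- The Quillen ideal of a polynomial matrix `F`: those `a` such that `F(x + a y) ~ F(x)` for all
elements `x`, `y` of all `R`-algebras. To avoid quantifying over algebras, the condition is imposed
on the universal pair of elements `C X`, `X` of `R[X][X]` only. -/
noncomputable def quillenIdeal (F : Matrix (Fin l) (Fin m) R[X]) : Ideal R where
  carrier :=
    {a | MatrixEquiv (F.map (aeval (C X + a • X : R[X][X]))) (F.map (aeval (C X : R[X][X])))}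
  zero_mem' := by
    rw [Set.mem_ofPred_eq, zero_smul, add_zero]
    exact .refl _
  add_mem' {a b} ha hb := by
    rw [Set.mem_ofPred_eq, add_smul, add_comm (a • X), ← add_assoc]
    exact (MatrixEquiv.aeval_add_smul ha (C X + b • X : R[X][X]) X).trans hb
  smul_mem' r a ha := by
    rw [Set.mem_ofPred_eq, smul_eq_mul, mul_comm, mul_smul]
    exact MatrixEquiv.aeval_add_smul ha (C X : R[X][X]) (r • X)

theorem mem_quillenIdeal {F : Matrix (Fin l) (Fin m) R[X]} {a : R} :
    a ∈ quillenIdeal F ↔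
      MatrixEquiv (F.map (aeval (C X + a • X : R[X][X]))) (F.map (aeval (C X : R[X][X]))) :=
  .rfl

theorem coe_aeval_X (T : Type*) [CommRing T] [Algebra R T] :
    ⇑(aeval (R := R) (X : T[X])) = Polynomial.map (algebraMap R T) :=
  funext aeval_X_left_eq_map

theorem coe_aeval_zero (T : Type*) [CommRing T] [Algebra R T] :
    ⇑(aeval (R := R) (0 : T[X])) = fun f => C (algebraMap R T (f.eval 0)) := by
  ext1 f
  simp [aeval_def, eval₂_at_zero, coeff_zero_eq_eval_zero]

theorem exists_mem_quillenIdeal {T : Type*} [CommRing T] [Algebra R T] (M : Submonoid R)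
    [IsLocalization M T] {F : Matrix (Fin l) (Fin m) R[X]}
    (h : MatrixEquiv (F.map (aeval (X : T[X]))) (F.map (aeval (0 : T[X])))) :
    ∃ s ∈ M, s ∈ quillenIdeal F := by
  have hXY : MatrixEquiv (F.map (aeval (C X + X : T[X][X]))) (F.map (aeval (C X : T[X][X]))) := by
    have h₀ (z : T[X][X]) : MatrixEquiv (F.map (aeval z)) (F.map (aeval (0 : T[X][X]))) := by
      simpa using h.map_aeval ((aeval z).restrictScalars R)
    exact (h₀ _).trans (h₀ _).symm
  let : Algebra R[X] T[X] := Polynomial.algebra R T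
  have := Polynomial.isLocalization M T
  have map_eq (z : R[X][X]) : (F.map (aeval z)).map (mapRingHom (algebraMap R[X] T[X])) =
      F.map (aeval (z.map (mapRingHom (algebraMap R T)))) := by
    ext1
    exact (aeval_algHom_apply (mapAlgHom (mapAlgHom (Algebra.ofId R T))) z _).symm
  obtain ⟨_, ⟨s, hs, rfl⟩, hE⟩ := MatrixEquiv.exists_map_rescale (A' := T[X])
    (M.map C) (F := F.map (aeval (C X + X : R[X][X]))) (by
      rw [map_eq]
      simpa only [map_aeval_map_rescale, Polynomial.map_add, map_C, map_X, coe_mapRingHom,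
        rescale_C_add_X, map_zero, zero_mul, add_zero] using hXY)
  have smul_X : s • (X : R[X][X]) = C (C s) * X := by simp [Algebra.smul_def]
  refine ⟨s, hs, mem_quillenIdeal.2 ?_⟩
  simpa only [smul_X, map_aeval_map_rescale, rescale_C_add_X, map_zero, zero_mul, add_zero] using hE

end QuillenIdeal

/-- if `F(t) ∼ F(0)` over `R_P[t]` for every maximal ideal `P` of `R`,
then `F(t) ∼ F(0)` over `R[t]`. -/
theorem stmt2 {R : Type*} [CommRing R] {l m : ℕ}
    (F : Matrix (Fin l) (Fin m) (Polynomial R))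
    (h : ∀ (P : Ideal R) [P.IsMaximal],
      MatrixEquiv
        (F.map (Polynomial.map (algebraMap R (Localization.AtPrime P))))
        (F.map (fun f => Polynomial.C (algebraMap R (Localization.AtPrime P) (f.eval 0))))) :
    MatrixEquiv F (F.map (fun f => Polynomial.C (f.eval 0))) := by
  have htop : quillenIdeal F = ⊤ := by
    by_contra hne
    obtain ⟨P, hP, hle⟩ := Ideal.exists_le_maximal _ hne
    have hloc : MatrixEquiv (F.map (aeval (X : (Localization.AtPrime P)[X])))
        (F.map (aeval (0 : (Localization.AtPrime P)[X]))) := by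
      simpa only [coe_aeval_X, coe_aeval_zero] using h P
    obtain ⟨s, hsP, hs⟩ := exists_mem_quillenIdeal P.primeCompl hloc
    exact hsP (hle hs)
  have hone : (1 : R) ∈ quillenIdeal F := htop ▸ Submodule.mem_top
  simpa [coe_aeval_X, coe_aeval_zero, -coe_aeval_eq_eval] using
    (mem_quillenIdeal.1 hone).aeval_add_smul (0 : R[X]) X
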